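/- For any field F and any n ∈ ℕ, the polynomial ring F[x₁, …, xₙ] is projective free, i.e., every finitely generated projective module over F[x₁, …, xₙ] is free (the Quillen–Suslin theorem). -/

import Mathlib

/-- A commutative unital ring is projective free if every finitely generated
projective module over it is free. -/
def IsProjectiveFree (R : Type*) [CommRing R] : Prop :=
  ∀ (M : Type) [AddCommGroup M] [Module R M],
    Module.Finite R M → Module.Projective R M → Module.Free R M

/-!
A finitely generated projective module is the image of an idempotent matrix `e`, and it is free
when `e` is Murray–von Neumann equivalent to an identity matrix. Let `F[x, σ]` be a polynomial ring
in one more variable than `F[σ]`, and let `e` be an idempotent matrix over it. By induction the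
image of `e` is free over `F(x)[σ]`, and clearing denominators makes it free after inverting a
single polynomial in `x`, which may be taken monic. Regard `e` as a matrix over `A[x]`, where
`A = F[σ]`.

If `A` were local, the image of `e` would be free already (Horrocks): it is isomorphic to a
submodule of `A[x]ʳ` containing `c A[x]ʳ` for a monic `c`. Over the residue field such a submodule
has a complement consisting of the vectors with entries of bounded degree, and Nakayama's lemma
lifts from this that `r` elements generate it.

For general `A`, the elements `a` such that `e(x + a y)` and `e(x)` have isomorphic images form an
ideal (Quillen). By the local case it lies in no maximal ideal, so it contains `1`, and `e` is
equivalent to `e(0)`, a matrix over `A`, to which the induction hypothesis applies.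
-/

open Polynomial nonZeroDivisors

universe u

namespace QuillenSuslin

section IdempotentMatrices

variable {R S : Type*} [CommRing R] [CommRing S]

lemma matrix_map_one {m : Type*} [DecidableEq m] (φ : R →+* S) :
    (1 : Matrix m m R).map φ = 1 :=
  Matrix.map_one φ (map_zero φ) (map_one φ)

lemma matrix_map_map {T m n : Type*} [CommRing T] (φ : R →+* S) (ψ : S →+* T)
    (N : Matrix m n R) : (N.map φ).map ψ = N.map (ψ.comp φ) :=
  rfl

variable {l m n : Type*} [Fintype l] [Fintype m] [Fintype n]

/-- Murray–von Neumann equivalence of square matrices, possibly of different sizes. For idempotent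
matrices this says that their images are isomorphic modules. -/
def MvNEquiv (e : Matrix m m R) (f : Matrix n n R) : Prop :=
  ∃ (x : Matrix m n R) (y : Matrix n m R), x * y = e ∧ y * x = f

lemma MvNEquiv.refl {e : Matrix m m R} (he : IsIdempotentElem e) : MvNEquiv e e :=
  ⟨e, e, he, he⟩

lemma MvNEquiv.trans {e : Matrix l l R} {f : Matrix m m R} {g : Matrix n n R}
    (he : IsIdempotentElem e) (hg : IsIdempotentElem g) (hef : MvNEquiv e f)
    (hfg : MvNEquiv f g) : MvNEquiv e g := by
  obtain ⟨x, y, rfl, hyx⟩ := hef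
  obtain ⟨z, w, hzw, rfl⟩ := hfg
  have hmid : y * x = z * w := hyx.trans hzw.symm
  refine ⟨x * z, w * y, ?_, ?_⟩
  · calc x * z * (w * y) = x * (z * w) * y := by simp only [Matrix.mul_assoc]
      _ = (x * y) * (x * y) := by rw [← hmid]; simp only [Matrix.mul_assoc]
      _ = x * y := he
  · calc w * y * (x * z) = w * (y * x) * z := by simp only [Matrix.mul_assoc]
      _ = (w * z) * (w * z) := by rw [hmid]; simp only [Matrix.mul_assoc]
      _ = w * z := hg

lemma MvNEquiv.map {e : Matrix m m R} {f : Matrix n n R} (φ : R →+* S) (h : MvNEquiv e f) :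
    MvNEquiv (e.map φ) (f.map φ) := by
  obtain ⟨x, y, rfl, rfl⟩ := h
  exact ⟨x.map φ, y.map φ, Matrix.map_mul.symm, Matrix.map_mul.symm⟩

lemma isIdempotentElem_map {e : Matrix m m R} (φ : R →+* S) (he : IsIdempotentElem e) :
    IsIdempotentElem (e.map φ) := by
  rw [IsIdempotentElem, ← Matrix.map_mul, he.eq]

/-- The matrix `e` is Murray–von Neumann equivalent to an identity matrix. For idempotent `e` this
says that the image of `e` is a free module of finite rank. -/
def HasFreeImage (e : Matrix m m R) : Prop :=
  ∃ r : ℕ, MvNEquiv e (1 : Matrix (Fin r) (Fin r) R)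

lemma HasFreeImage.map {e : Matrix m m R} (φ : R →+* S) (h : HasFreeImage e) :
    HasFreeImage (e.map φ) := by
  obtain ⟨r, hr⟩ := h
  exact ⟨r, matrix_map_one (m := Fin r) φ ▸ hr.map φ⟩

lemma hasFreeImage_map_ringEquiv_iff {e : Matrix m m R} (φ : R ≃+* S) :
    HasFreeImage (e.map φ) ↔ HasFreeImage e := by
  refine ⟨fun h => ?_, fun h => h.map φ.toRingHom⟩
  simpa [Matrix.map_map, Function.comp_def] using h.map φ.symm.toRingHom

lemma hasFreeImage_of_free_range [Nontrivial R] [DecidableEq m] {e : Matrix m m R}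
    (he : IsIdempotentElem e) [Module.Free R (LinearMap.range (Matrix.toLin' e))] :
    HasFreeImage e := by
  let p := Matrix.toLin' e
  let b := (Module.finBasis R (LinearMap.range p)).equivFun
  have hp : p.rangeRestrict ∘ₗ (LinearMap.range p).subtype = LinearMap.id := by
    ext ⟨_, v, rfl⟩
    simp [p, Matrix.mulVec_mulVec, he.eq]
  refine ⟨_, ((LinearMap.range p).subtype ∘ₗ b.symm.toLinearMap).toMatrix',
    (b.toLinearMap ∘ₗ p.rangeRestrict).toMatrix', ?_, ?_⟩
  · rw [← LinearMap.toMatrix'_comp, ← LinearMap.toMatrix'_toLin' e]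
    congr 1
    refine LinearMap.ext fun v => ?_
    exact congrArg Subtype.val (b.symm_apply_apply (p.rangeRestrict v))
  · rw [← LinearMap.toMatrix'_comp, ← LinearMap.toMatrix'_id]
    congr 1
    refine LinearMap.ext fun v => ?_
    exact (congrArg b (LinearMap.congr_fun hp (b.symm v))).trans (b.apply_symm_apply v)

/-- Every idempotent matrix over `R` has free image; this is projective freeness of `R`, stated
without reference to modules. -/
def IdempotentsHaveFreeImage (R : Type*) [CommRing R] : Prop :=
  ∀ (n : ℕ) (e : Matrix (Fin n) (Fin n) R), IsIdempotentElem e → HasFreeImage e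

lemma idempotentsHaveFreeImage_of_field (K : Type*) [Field K] : IdempotentsHaveFreeImage K :=
  fun _ _ he => hasFreeImage_of_free_range he

lemma IdempotentsHaveFreeImage.of_ringEquiv (φ : R ≃+* S) (h : IdempotentsHaveFreeImage S) :
    IdempotentsHaveFreeImage R :=
  fun n e he => (hasFreeImage_map_ringEquiv_iff φ).mp
    (h n (e.map φ) (isIdempotentElem_map φ.toRingHom he))

lemma IdempotentsHaveFreeImage.free (h : IdempotentsHaveFreeImage R) (M : Type*)
    [AddCommGroup M] [Module R M] [Module.Finite R M] [Module.Projective R M] :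
    Module.Free R M := by
  obtain ⟨n, f, hf⟩ := Module.Finite.exists_fin' R M
  obtain ⟨s, hfs⟩ := Module.projective_lifting_property f LinearMap.id hf
  have hfs_apply : ∀ v, f (s v) = v := LinearMap.congr_fun hfs
  have he : IsIdempotentElem (LinearMap.toMatrix' (s ∘ₗ f)) := by
    rw [IsIdempotentElem, ← LinearMap.toMatrix'_comp]
    congr 1
    ext
    simp [hfs_apply]
  obtain ⟨r, x, y, hxy, hyx⟩ := h n _ he
  have hxy_apply : ∀ v, x.mulVec (y.mulVec v) = s (f v) := fun v => by
    rw [Matrix.mulVec_mulVec, hxy, LinearMap.toMatrix'_mulVec, LinearMap.comp_apply]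
  have hyx_apply : ∀ v, y.mulVec (x.mulVec v) = v := fun v => by
    rw [Matrix.mulVec_mulVec, hyx, Matrix.one_mulVec]
  refine Module.Free.of_equiv (LinearEquiv.ofLinearMap (f ∘ₗ x.mulVecLin) (y.mulVecLin ∘ₗ s) ?_ ?_)
  · ext v
    simp [hxy_apply, hfs_apply]
  · refine LinearMap.ext fun v => ?_
    have : s (f (x.mulVec v)) = x.mulVec v := by rw [← hxy_apply, hyx_apply]
    simp [this, hyx_apply]

end IdempotentMatrices

section SplitsAway

variable {R S : Type*} [CommRing R] [CommRing S]
variable {m : Type*} [Fintype m]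

/-- The image of `e` becomes free once `c` is inverted: `α` and `β` are maps between the image of
`e` and a free module which are inverse to each other up to the factor `c`. -/
def SplitsAway (c : R) (e : Matrix m m R) : Prop :=
  ∃ (r : ℕ) (α : Matrix m (Fin r) R) (β : Matrix (Fin r) m R),
    α * β = c • e ∧ β * α = c • 1 ∧ β * e = β

lemma SplitsAway.map {c : R} {e : Matrix m m R} (φ : R →+* S) (h : SplitsAway c e) :
    SplitsAway (φ c) (e.map φ) := by
  obtain ⟨r, α, β, hαβ, hβα, hβe⟩ := h
  refine ⟨r, α.map φ, β.map φ, ?_, ?_, ?_⟩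
  · rw [← Matrix.map_mul, hαβ, Matrix.map_smul' _ _ _ (map_mul φ)]
  · rw [← Matrix.map_mul, hβα, Matrix.map_smul' _ _ _ (map_mul φ), matrix_map_one]
  · rw [← Matrix.map_mul, hβe]

lemma SplitsAway.mul_left {c : R} {e : Matrix m m R} (a : R) (h : SplitsAway c e) :
    SplitsAway (a * c) e := by
  obtain ⟨r, α, β, hαβ, hβα, hβe⟩ := h
  exact ⟨r, a • α, β, by rw [Matrix.smul_mul, hαβ, mul_smul],
    by rw [Matrix.mul_smul, hβα, mul_smul], hβe⟩

lemma exists_map_eq_smul {m n : Type*} [Finite m] [Finite n] {L : Type*} [CommRing L]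
    [Algebra R L] (M : Submonoid R) [IsLocalization M L] (x : Matrix m n L) :
    ∃ s ∈ M, ∃ y : Matrix m n R, y.map (algebraMap R L) = algebraMap R L s • x := by
  obtain ⟨s, hs⟩ :=
    IsLocalization.exist_integer_multiples_of_finite M fun ij : m × n => x ij.1 ij.2
  choose y hy using hs
  refine ⟨s, s.2, Matrix.of fun i j => y (i, j), ?_⟩
  ext i j
  simp [hy, Algebra.smul_def]

lemma exists_splitsAway {L : Type*} [CommRing L] [Algebra R L] {M : Submonoid R}
    [IsLocalization M L] (hM : M ≤ R⁰) {e : Matrix m m R}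
    (he : HasFreeImage (e.map (algebraMap R L))) : ∃ s ∈ M, SplitsAway s e := by
  obtain ⟨r, x, y, hxy, hyx⟩ := he
  obtain ⟨a, ha, α, hα⟩ := exists_map_eq_smul M x
  obtain ⟨b, hb, β, hβ⟩ := exists_map_eq_smul M y
  have hinj : Function.Injective (algebraMap R L) := IsLocalization.injective L hM
  have hye : y * e.map (algebraMap R L) = y := by
    rw [← hxy, ← Matrix.mul_assoc, hyx, Matrix.one_mul]
  refine ⟨a * b, M.mul_mem ha hb, r, α, β, Matrix.map_injective hinj ?_,
    Matrix.map_injective hinj ?_, Matrix.map_injective hinj ?_⟩ <;> beta_reduce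
  · rw [Matrix.map_mul, hα, hβ, Matrix.smul_mul, Matrix.mul_smul, hxy, smul_smul, ← map_mul,
      Matrix.map_smul' _ _ _ (map_mul (algebraMap R L))]
  · rw [Matrix.map_mul, hα, hβ, Matrix.smul_mul, Matrix.mul_smul, hyx, smul_smul, ← map_mul,
      Matrix.map_smul' _ _ _ (map_mul (algebraMap R L)), matrix_map_one, mul_comm]
  · rw [Matrix.map_mul, hβ, Matrix.smul_mul, hye]

end SplitsAway

section Patching

variable {A L : Type*} [CommRing A] [CommRing L] [Algebra A L] {M : Submonoid A}
  [IsLocalization M L]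

variable (M) in
lemma exists_comp_C_mul_X_mem_lifts {ι : Type*} [Finite ι] {p : ι → L[X]}
    (hp : ∀ i, (p i).coeff 0 ∈ Set.range (algebraMap A L)) :
    ∃ s ∈ M, ∀ i, (p i).comp (C (algebraMap A L s) * X) ∈ lifts (algebraMap A L) := by
  classical
  cases nonempty_fintype ι
  obtain ⟨s, hs⟩ := IsLocalization.exist_integer_multiples_of_finset M
    (Finset.univ.biUnion fun i => (p i).coeffs)
  refine ⟨s, s.2, fun i => (lifts_iff_coeff_lifts _).mpr fun k => ?_⟩
  rw [comp_C_mul_X_coeff]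
  rcases k with _ | k
  · simpa only [pow_zero, mul_one] using hp i
  · by_cases hk : (p i).coeff (k + 1) = 0
    · exact ⟨0, by rw [hk, zero_mul, map_zero]⟩
    · obtain ⟨a, ha⟩ := hs _ (Finset.mem_biUnion.mpr
        ⟨i, Finset.mem_univ i, coeff_mem_coeffs hk⟩)
      refine ⟨a * s ^ k, ?_⟩
      rw [map_mul, map_pow, ha, Algebra.smul_def]
      ring

variable {m n : Type*} [Fintype m] [Fintype n]

lemma exists_mvNEquiv_comp_C_mul_X (hM : M ≤ A⁰) {f : Matrix m m A[X]} {g : Matrix n n A[X]}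
    {x : Matrix m n L[X]} {y : Matrix n m L[X]}
    (hxy : x * y = f.map (mapRingHom (algebraMap A L)))
    (hyx : y * x = g.map (mapRingHom (algebraMap A L)))
    (hx : ∀ i j, (x i j).coeff 0 ∈ Set.range (algebraMap A L))
    (hy : ∀ i j, (y i j).coeff 0 ∈ Set.range (algebraMap A L)) :
    ∃ s ∈ M, MvNEquiv (f.map (compRingHom (C s * X))) (g.map (compRingHom (C s * X))) := by
  obtain ⟨s, hs, hlift⟩ := exists_comp_C_mul_X_mem_lifts M
    (p := Sum.elim (fun ij : m × n => x ij.1 ij.2) fun ij : n × m => y ij.1 ij.2)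
    (Sum.rec (fun ij => hx ij.1 ij.2) fun ij => hy ij.1 ij.2)
  choose x' hx' using fun i j => (mem_lifts _).mp (hlift (Sum.inl (i, j)))
  choose y' hy' using fun i j => (mem_lifts _).mp (hlift (Sum.inr (i, j)))
  have hinj : Function.Injective (mapRingHom (algebraMap A L)) :=
    map_injective _ (IsLocalization.injective L hM)
  have hcomm : (mapRingHom (algebraMap A L)).comp (compRingHom (C s * X)) =
      (compRingHom (C (algebraMap A L s) * X)).comp (mapRingHom (algebraMap A L)) := by
    ext <;> simp
  have hx'map : (Matrix.of x').map (mapRingHom (algebraMap A L)) =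
      x.map (compRingHom (C (algebraMap A L s) * X)) := Matrix.ext hx'
  have hy'map : (Matrix.of y').map (mapRingHom (algebraMap A L)) =
      y.map (compRingHom (C (algebraMap A L s) * X)) := Matrix.ext hy'
  refine ⟨s, hs, Matrix.of x', Matrix.of y', Matrix.map_injective hinj ?_,
    Matrix.map_injective hinj ?_⟩ <;> beta_reduce
  · rw [Matrix.map_mul, hx'map, hy'map, ← Matrix.map_mul, hxy, matrix_map_map, ← hcomm,
      matrix_map_map]
  · rw [Matrix.map_mul, hx'map, hy'map, ← Matrix.map_mul, hyx, matrix_map_map, ← hcomm,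
      matrix_map_map]

end Patching

section QuillenIdeal

variable {A : Type u} [CommRing A] {m : Type*} [Fintype m] {e : Matrix m m A[X]}

/-- Quillen's ideal of those `a : A` for which translating the variable by multiples of `a` does
not change the class of the idempotent matrix `e`. Points `x`, `y` of arbitrary `A`-algebras stand
for the two variables of `e(X + aY) ∼ e(X)`, which makes closure under addition immediate. -/
def quillenIdeal (e : Matrix m m A[X]) (he : IsIdempotentElem e) : Ideal A where
  carrier := {a | ∀ (B : Type u) [CommRing B] [Algebra A B] (x y : B),
    MvNEquiv (e.map (aeval (x + algebraMap A B a * y)).toRingHom) (e.map (aeval x).toRingHom)}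
  zero_mem' B _ _ x y := by
    rw [map_zero, zero_mul, add_zero]
    exact .refl (isIdempotentElem_map _ he)
  add_mem' {a b} ha hb B _ _ x y := by
    rw [map_add, add_mul, ← add_assoc]
    exact (hb B (x + algebraMap A B a * y) y).trans (isIdempotentElem_map _ he)
      (isIdempotentElem_map _ he) (ha B x y)
  smul_mem' c a ha B _ _ x y := by
    have := ha B x (algebraMap A B c * y)
    rwa [← mul_assoc, mul_comm (algebraMap A B a), ← map_mul] at this

lemma mem_quillenIdeal {he : IsIdempotentElem e} {a : A}
    (h : MvNEquiv (e.map (aeval (C X + C (C a) * X : A[X][X])).toRingHom) (e.map C)) :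
    a ∈ quillenIdeal e he := by
  intro B _ _ x y
  have := h.map (aevalAeval x y).toRingHom
  rw [matrix_map_map, matrix_map_map] at this
  convert this using 3
  · ext <;> simp
  · ext <;> simp

lemma mul_mul_mul_map_of_mul_eq_one {R S n : Type*} [CommRing R] [CommRing S] [Fintype n]
    [DecidableEq n] {x : Matrix m n R} {y : Matrix n m R} (hyx : y * x = 1) (φ ψ : R →+* S) :
    x.map φ * y.map ψ * (x.map ψ * y.map φ) = (x * y).map φ := by
  calc x.map φ * y.map ψ * (x.map ψ * y.map φ)
      = x.map φ * (y * x).map ψ * y.map φ := by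
        rw [Matrix.map_mul]; simp only [Matrix.mul_assoc]
    _ = (x * y).map φ := by rw [hyx, matrix_map_one, Matrix.mul_one, Matrix.map_mul]

lemma exists_mem_quillenIdeal {L : Type*} [CommRing L] [Algebra A L] {M : Submonoid A}
    [IsLocalization M L] (hM : M ≤ A⁰) (he : IsIdempotentElem e)
    (h : HasFreeImage (e.map (mapRingHom (algebraMap A L)))) :
    ∃ s ∈ M, s ∈ quillenIdeal e he := by
  obtain ⟨r, x, y, hxy, hyx⟩ := h
  let : Algebra A[X] L[X] := Polynomial.algebra A L
  have : IsLocalization (M.map C) L[X] := Polynomial.isLocalization M L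
  have hMC : M.map (C : A →+* A[X]) ≤ A[X]⁰ := by
    rintro _ ⟨s, hs, rfl⟩
    exact mem_nonzeroDivisors_of_coeff_mem 0 (by simpa using hM hs)
  let ι : A[X][X] →+* L[X][X] := mapRingHom (algebraMap A[X] L[X])
  let θ : A[X] →+* A[X][X] := (aeval (C X + X : A[X][X])).toRingHom
  let τ : L[X] →+* L[X][X] := (aeval (C X + X : L[X][X])).toRingHom
  have hτθ : τ.comp (mapRingHom (algebraMap A L)) = ι.comp θ := by
    ext <;> simp [τ, θ, ι, Polynomial.algebraMap_def]
  have hC : C.comp (mapRingHom (algebraMap A L)) = ι.comp C := by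
    ext <;> simp [ι, Polynomial.algebraMap_def]
  have hτ0 : constantCoeff.comp τ = RingHom.id L[X] := by
    ext <;> simp [τ]
  have hC0 : constantCoeff.comp C = RingHom.id L[X] := by
    ext <;> simp
  have htranslate : x.map τ * y.map C * (x.map C * y.map τ) = (e.map θ).map ι := by
    rw [mul_mul_mul_map_of_mul_eq_one hyx, hxy, matrix_map_map, hτθ, matrix_map_map]
  have hconst : x.map C * y.map τ * (x.map τ * y.map C) = (e.map C).map ι := by
    rw [mul_mul_mul_map_of_mul_eq_one hyx, hxy, matrix_map_map, hC, matrix_map_map]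
  have hzero {σ₁ σ₂ : L[X] →+* L[X][X]} (h₁ : constantCoeff.comp σ₁ = RingHom.id L[X])
      (h₂ : constantCoeff.comp σ₂ = RingHom.id L[X]) (i j : m) :
      ((x.map σ₁ * y.map σ₂) i j).coeff 0 ∈ Set.range (algebraMap A[X] L[X]) := by
    have : (x.map σ₁ * y.map σ₂).map constantCoeff = x * y := by
      rw [Matrix.map_mul, matrix_map_map, matrix_map_map, h₁, h₂]
      exact congrArg₂ _ x.map_id y.map_id
    exact ⟨e i j, (congrFun₂ (this.trans hxy) i j).symm⟩
  obtain ⟨_, ⟨s, hs, rfl⟩, hequiv⟩ :=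
    exists_mvNEquiv_comp_C_mul_X hMC htranslate hconst (hzero hτ0 hC0) (hzero hC0 hτ0)
  rw [matrix_map_map, matrix_map_map] at hequiv
  refine ⟨s, hs, mem_quillenIdeal ?_⟩
  convert hequiv using 3
  · ext <;> simp [θ]
  · ext <;> simp

theorem mvNEquiv_map_C_eval_zero [IsDomain A] (he : IsIdempotentElem e)
    (hlocal : ∀ (P : Ideal A) [P.IsMaximal],
      HasFreeImage (e.map (mapRingHom (algebraMap A (Localization.AtPrime P))))) :
    MvNEquiv e ((e.map (evalRingHom 0)).map C) := by
  have htop : quillenIdeal e he = ⊤ := by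
    by_contra hne
    obtain ⟨P, hP, hle⟩ := Ideal.exists_le_maximal _ hne
    obtain ⟨s, hsP, hs⟩ :=
      exists_mem_quillenIdeal P.primeCompl_le_nonZeroDivisors he (hlocal P)
    exact hsP (hle hs)
  have h1 : (1 : A) ∈ quillenIdeal e he := htop ▸ Submodule.mem_top
  have hX : (aeval (0 + algebraMap A A[X] 1 * X)).toRingHom = RingHom.id A[X] := by
    ext <;> simp
  have h0 : (aeval (0 : A[X])).toRingHom = C.comp (evalRingHom 0) := by
    ext <;> simp
  have := h1 A[X] 0 X
  rw [hX, h0] at this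
  exact this

end QuillenIdeal

section DegreeBox

variable {R : Type*} [CommRing R] {ι : Type*}

/-- The `R`-module of vectors of polynomials whose `i`-th entry has degree less than `κ i`. -/
noncomputable def degreeBox (R : Type*) [CommRing R] (κ : ι → ℕ) : Submodule R (ι → R[X]) :=
  Submodule.pi Set.univ fun i => degreeLT R (κ i)

lemma mem_degreeBox {κ : ι → ℕ} {v : ι → R[X]} :
    v ∈ degreeBox R κ ↔ ∀ i, v i ∈ degreeLT R (κ i) := by
  simp only [degreeBox, Submodule.mem_pi, Set.mem_univ, true_imp_iff]

lemma degreeBox_fg [Finite ι] (κ : ι → ℕ) : (degreeBox R κ).FG := by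
  classical
  refine Submodule.fg_pi fun i => ?_
  rw [degreeLT_eq_span_X_pow]
  exact ⟨_, rfl⟩

lemma exists_mem_degreeBox [Finite ι] (κ : ι → ℕ) (v : ι → R[X]) :
    ∃ d, v ∈ degreeBox R fun i => κ i + d := by
  obtain ⟨d, hd⟩ := (Set.finite_range fun i => (v i).natDegree).bddAbove
  refine ⟨d + 1, mem_degreeBox.mpr fun i => mem_degreeLT.mpr ?_⟩
  refine degree_le_natDegree.trans_lt (Nat.cast_lt.mpr ?_)
  have := hd ⟨i, rfl⟩
  dsimp only at this
  lia

lemma finite_quotient_of_degreeBox_sup_eq_top [Finite ι] {κ : ι → ℕ}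
    {N : Submodule R (ι → R[X])} (h : degreeBox R κ ⊔ N = ⊤) :
    Module.Finite R ((ι → R[X]) ⧸ N) := by
  have : (degreeBox R κ).map N.mkQ = ⊤ :=
    (Submodule.map_mkQ_eq_top N _).mpr ((sup_comm _ _).trans h)
  exact ⟨this ▸ (degreeBox_fg κ).map N.mkQ⟩

lemma degreeBox_sup_eq_top_of_monic_smul_mem {c : R[X]} (hc : c.Monic)
    {P : Submodule R (ι → R[X])} (hP : ∀ v : ι → R[X], c • v ∈ P) :
    degreeBox R (fun _ => c.natDegree) ⊔ P = ⊤ := by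
  nontriviality R
  refine Submodule.eq_top_iff'.mpr fun v => ?_
  rw [show v = (fun i => v i %ₘ c) + c • fun i => v i /ₘ c from
    funext fun i => (modByMonic_add_div (v i) c).symm]
  refine Submodule.add_mem_sup (mem_degreeBox.mpr fun i => mem_degreeLT.mpr ?_) (hP _)
  exact degree_eq_natDegree hc.ne_zero ▸ degree_modByMonic_lt (v i) hc

lemma C_mul_X_pow_smul_mem_degreeBox {κ : ι → ℕ} {v : ι → R[X]} (hv : v ∈ degreeBox R κ) (a : R)
    (d : ℕ) : (C a * X ^ d) • v ∈ degreeBox R fun i => κ i + d := by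
  refine mem_degreeBox.mpr fun i => mem_degreeLT.mpr ?_
  have := mem_degreeLT.mp (mem_degreeBox.mp hv i)
  rw [degree_lt_iff_coeff_zero] at this ⊢
  intro k hk
  rw [Pi.smul_apply, smul_eq_mul, mul_assoc, coeff_C_mul, X_pow_mul, coeff_mul_X_pow',
    if_pos (by lia), this _ (by lia), mul_zero]

lemma degreeBox_sup_span_eq_top [Finite ι] [DecidableEq ι] {κ : ι → ℕ} {q : ι → ι → R[X]}
    (hq : ∀ l, Pi.single l (X ^ κ l) - q l ∈ degreeBox R κ) :
    degreeBox R κ ⊔ (Submodule.span R[X] (Set.range q)).restrictScalars R = ⊤ := by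
  cases nonempty_fintype ι
  set G := Submodule.span R[X] (Set.range q)
  suffices h : ∀ d, degreeBox R (fun i => κ i + d) ≤ degreeBox R κ ⊔ G.restrictScalars R by
    refine Submodule.eq_top_iff'.mpr fun v => ?_
    obtain ⟨d, hd⟩ := exists_mem_degreeBox κ v
    exact h d hd
  intro d
  induction d with
  | zero => exact le_sup_left
  | succ d ih =>
    intro v hv
    let t : ι → R[X] := fun l => C ((v l).coeff (κ l + d)) * X ^ d
    have hlead : v - ∑ l, t l • Pi.single l (X ^ κ l) ∈ degreeBox R fun i => κ i + d := by
      refine mem_degreeBox.mpr fun i => mem_degreeLT.mpr ?_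
      have hvi := mem_degreeLT.mp (mem_degreeBox.mp hv i)
      rw [degree_lt_iff_coeff_zero] at hvi ⊢
      intro k hk
      have : (∑ l, t l • Pi.single l (X ^ κ l) : ι → R[X]) i =
          C ((v i).coeff (κ i + d)) * X ^ (κ i + d) := by
        simp [t, Finset.sum_apply, Pi.single_apply, mul_assoc, ← pow_add, add_comm d]
      rw [Pi.sub_apply, this, coeff_sub, coeff_C_mul_X_pow]
      split_ifs with hkd
      · rw [hkd, sub_self]
      · rw [hvi k (by lia), sub_zero]
    have hcorr : ∑ l, t l • (Pi.single l (X ^ κ l) - q l) ∈ degreeBox R fun i => κ i + d :=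
      Submodule.sum_mem _ fun l _ => C_mul_X_pow_smul_mem_degreeBox (hq l) _ d
    have hG : ∑ l, t l • q l ∈ G :=
      G.sum_mem fun l _ => G.smul_mem _ (Submodule.subset_span ⟨l, rfl⟩)
    have hsum : v = (v - ∑ l, t l • Pi.single l (X ^ κ l)) +
        ∑ l, t l • (Pi.single l (X ^ κ l) - q l) + ∑ l, t l • q l := by
      simp only [smul_sub, Finset.sum_sub_distrib]
      abel
    rw [hsum]
    exact add_mem (ih (add_mem hlead hcorr)) (Submodule.mem_sup_right hG)

lemma exists_mem_forall_apply_dvd {S : Type*} [CommRing S] [IsPrincipalIdealRing S]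
    (Q : Submodule S (ι → S)) (i : ι) : ∃ u ∈ Q, ∀ v ∈ Q, u i ∣ v i := by
  obtain ⟨g, hg⟩ := (IsPrincipalIdealRing.principal (Q.map (LinearMap.proj i))).principal
  obtain ⟨u, huQ, rfl⟩ : ∃ u ∈ Q, u i = g :=
    Submodule.mem_map.mp (hg ▸ Submodule.mem_span_singleton_self g)
  exact ⟨u, huQ, fun v hv => Ideal.mem_span_singleton.mp
    (hg ▸ ⟨v, hv, rfl⟩ : v i ∈ Submodule.span S {u i})⟩

lemma exists_isCompl_degreeBox {K : Type*} [Field K] {c : K[X]} (hc : c ≠ 0) {r : ℕ}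
    {Q : Submodule K[X] (Fin r → K[X])} (hQ : ∀ v, c • v ∈ Q) :
    ∃ κ : Fin r → ℕ, IsCompl (degreeBox K κ) (Q.restrictScalars K) := by
  induction r with
  | zero => exact ⟨0, by simp [isCompl_iff]⟩
  | succ r ih =>
    obtain ⟨u, huQ, hu_dvd⟩ := exists_mem_forall_apply_dvd Q 0
    have hu0 : u 0 ≠ 0 := fun h => hc (by simpa [h] using hu_dvd _ (hQ (Pi.single 0 1)))
    let consZero : (Fin r → K[X]) →ₗ[K[X]] Fin (r + 1) → K[X] :=
      (Fin.consLinearEquiv K[X] fun _ => K[X]).toLinearMap ∘ₗ LinearMap.inr _ _ _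
    have hconsZero (v) : consZero v = Fin.cons 0 v := rfl
    obtain ⟨κ, hdisj, hcodisj⟩ := ih (Q := Q.comap consZero) fun v => by
      rw [Submodule.mem_comap, map_smul]; exact hQ _
    refine ⟨Fin.cons (u 0).natDegree κ, Submodule.disjoint_def.mpr fun v hvbox hvQ => ?_,
      codisjoint_iff.mpr (Submodule.eq_top_iff'.mpr fun v => ?_)⟩
    · have hv0 : v 0 = 0 := eq_zero_of_dvd_of_degree_lt (hu_dvd v hvQ)
        (degree_eq_natDegree hu0 ▸ mem_degreeLT.mp (mem_degreeBox.mp hvbox 0))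
      have hv : v = consZero (Fin.tail v) := by rw [hconsZero, ← hv0, Fin.cons_self_tail]
      have htail : Fin.tail v = 0 := Submodule.disjoint_def.mp hdisj _
        (mem_degreeBox.mpr fun i => mem_degreeBox.mp hvbox i.succ)
        (show consZero (Fin.tail v) ∈ Q from hv ▸ hvQ)
      rw [hv, htail, map_zero]
    · obtain ⟨w, hw, p, hp, hwp⟩ := Submodule.mem_sup.mp
        (codisjoint_iff.mp hcodisj ▸ Submodule.mem_top :
          Fin.tail (v - (v 0 / u 0) • u) ∈ _ ⊔ (Q.comap consZero).restrictScalars K)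
      have hsplit : v = Fin.cons (v 0 % u 0) w + (consZero p + (v 0 / u 0) • u) := by
        refine funext (Fin.cases ?_ fun i => ?_)
        · simp [hconsZero, mul_comm, EuclideanDomain.mod_add_div]
        · have := congrFun hwp i
          simp only [Pi.add_apply, Fin.tail, Pi.sub_apply] at this
          simp only [hconsZero, Pi.add_apply, Fin.cons_succ, ← add_assoc, this, sub_add_cancel]
      rw [hsplit]
      refine Submodule.add_mem_sup (mem_degreeBox.mpr (Fin.cases ?_ fun i => ?_))
        (Q.add_mem hp (Q.smul_mem _ huQ))
      · exact mem_degreeLT.mpr (degree_eq_natDegree hu0 ▸ EuclideanDomain.mod_lt (v 0) hu0)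
      · exact mem_degreeBox.mp hw i

end DegreeBox

section MapCoeffs

variable {A B : Type*} [CommRing A] [CommRing B] {ι : Type*}

/-- Reduction of vectors of polynomials along a homomorphism of the coefficient rings, as a
semilinear map. -/
noncomputable def mapCoeffs (φ : A →+* B) (ι : Type*) :
    (ι → A[X]) →ₛₗ[mapRingHom φ] (ι → B[X]) where
  toFun v i := (v i).map φ
  map_add' _ _ := funext fun _ => Polynomial.map_add φ
  map_smul' _ _ := funext fun _ => Polynomial.map_mul φ

lemma mapCoeffs_surjective {φ : A →+* B} (hφ : Function.Surjective φ) :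
    Function.Surjective (mapCoeffs φ ι) := fun v => by
  choose w hw using fun i => map_surjective φ hφ (v i)
  exact ⟨w, funext hw⟩

lemma mapCoeffs_smul_coeff (φ : A →+* B) (a : A) (v : ι → A[X]) :
    mapCoeffs φ ι (a • v) = φ a • mapCoeffs φ ι v :=
  funext fun _ => by simp [mapCoeffs]

lemma mapCoeffs_mulVec {κ : Type*} [Fintype κ] (φ : A →+* B) (N : Matrix ι κ A[X])
    (v : κ → A[X]) :
    mapCoeffs φ ι (N.mulVec v) = (N.map (mapRingHom φ)).mulVec (mapCoeffs φ κ v) :=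
  funext fun i => RingHom.map_mulVec (mapRingHom φ) N v i

lemma exists_mem_degreeBox_mapCoeffs_eq {φ : A →+* B} (hφ : Function.Surjective φ) {κ : ι → ℕ}
    {w : ι → B[X]} (hw : w ∈ degreeBox B κ) : ∃ v ∈ degreeBox A κ, mapCoeffs φ ι v = w := by
  choose v hv hdeg using fun i => exists_degree_eq_of_mem_lifts (map_surjective φ hφ (w i))
  refine ⟨v, mem_degreeBox.mpr fun i => mem_degreeLT.mpr ?_, funext hv⟩
  exact hdeg i ▸ mem_degreeLT.mp (mem_degreeBox.mp hw i)

lemma mapCoeffs_mem_degreeBox (φ : A →+* B) {κ : ι → ℕ} {v : ι → A[X]}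
    (hv : v ∈ degreeBox A κ) : mapCoeffs φ ι v ∈ degreeBox B κ :=
  mem_degreeBox.mpr fun i => mem_degreeLT.mpr
    (degree_map_le.trans_lt (mem_degreeLT.mp (mem_degreeBox.mp hv i)))

lemma mapCoeffs_eq_zero_iff [Finite ι] {φ : A →+* B} {v : ι → A[X]} :
    mapCoeffs φ ι v = 0 ↔ v ∈ RingHom.ker φ • (⊤ : Submodule A (ι → A[X])) := by
  classical
  cases nonempty_fintype ι
  refine ⟨fun h => ?_, fun h => ?_⟩
  · have hcoeff (i k) : (v i).coeff k ∈ RingHom.ker φ := by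
      simpa [mapCoeffs] using congrArg (coeff · k) (congrFun h i)
    have hentry (i) : v i ∈ RingHom.ker φ • (⊤ : Submodule A A[X]) := by
      rw [Ideal.smul_top_eq_map]
      exact Ideal.mem_map_C_iff.mpr (hcoeff i)
    rw [← Finset.univ_sum_single v]
    refine Submodule.sum_mem _ fun i _ => ?_
    have := Submodule.mem_map_of_mem (f := LinearMap.single A (fun _ => A[X]) i) (hentry i)
    rw [Submodule.map_smul''] at this
    exact Submodule.smul_mono le_rfl le_top this
  · refine Submodule.smul_induction_on h (fun a ha v _ => ?_) fun v w hv hw => ?_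
    · rw [mapCoeffs_smul_coeff, RingHom.mem_ker.mp ha, zero_smul]
    · rw [map_add, hv, hw, add_zero]

end MapCoeffs

section LocalHorrocks

lemma le_of_le_sup_smul_of_finite_quotient {R M : Type*} [CommRing R] [IsNoetherianRing R]
    [AddCommGroup M] [Module R M] {I : Ideal R} (hI : I ≤ Ideal.jacobson ⊥)
    {N P : Submodule R M} [Module.Finite R (M ⧸ N)] (h : P ≤ N ⊔ I • P) : P ≤ N := by
  have hle : P.map N.mkQ ≤ I • P.map N.mkQ := by
    simpa [Submodule.map_sup, Submodule.map_smul''] using Submodule.map_mono (f := N.mkQ) h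
  have := Submodule.eq_bot_of_le_smul_of_le_jacobson_bot I _ (IsNoetherian.noetherian _) hle hI
  rw [← Submodule.ker_mkQ N]
  exact LinearMap.le_ker_iff_map.mpr this

variable {A : Type*} [CommRing A] [IsLocalRing A] {r : ℕ}

open IsLocalRing

lemma degreeBox_sup_eq_top_of_mapCoeffs [IsNoetherianRing A] {c : A[X]} (hc : c.Monic)
    {P : Submodule A (Fin r → A[X])} (hcP : ∀ v : Fin r → A[X], c • v ∈ P) {κ : Fin r → ℕ}
    (h : ∀ v, ∃ p ∈ P, mapCoeffs (residue A) (Fin r) (v - p) ∈ degreeBox (ResidueField A) κ) :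
    degreeBox A κ ⊔ P = ⊤ := by
  have : Module.Finite A ((Fin r → A[X]) ⧸ degreeBox A κ ⊔ P) :=
    finite_quotient_of_degreeBox_sup_eq_top
      (degreeBox_sup_eq_top_of_monic_smul_mem hc fun v => Submodule.mem_sup_right (hcP v))
  refine top_le_iff.mp
    (le_of_le_sup_smul_of_finite_quotient (maximalIdeal_le_jacobson _) fun v _ => ?_)
  obtain ⟨p, hp, hvp⟩ := h v
  obtain ⟨w, hw, hwv⟩ := exists_mem_degreeBox_mapCoeffs_eq residue_surjective hvp
  rw [← add_sub_cancel (w + p) v, ← ker_residue]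
  refine Submodule.add_mem_sup (Submodule.add_mem_sup hw hp) (mapCoeffs_eq_zero_iff.mp ?_)
  rw [add_comm, ← sub_sub, map_sub, hwv, sub_self]

-- Over the residue field `P` has a box of low-degree vectors as a complement. Nakayama's lemma
-- lifts the spanning half of this to `A`, and the generators are the elements of `P` whose leading
-- terms are the monomials just outside the box.
theorem exists_span_range_eq_of_monic_smul_mem [IsNoetherianRing A] {c : A[X]} (hc : c.Monic)
    {P : Submodule A[X] (Fin r → A[X])} (hcP : ∀ v, c • v ∈ P)
    (hP : P.restrictScalars A ⊓ maximalIdeal A • ⊤ ≤ maximalIdeal A • P.restrictScalars A) :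
    ∃ q : Fin r → Fin r → A[X], Submodule.span A[X] (Set.range q) = P := by
  let π := mapCoeffs (residue A) (Fin r)
  have : RingHomSurjective (mapRingHom (residue A)) := ⟨map_surjective _ residue_surjective⟩
  obtain ⟨κ, hdisj, hcodisj⟩ := exists_isCompl_degreeBox (hc.map (residue A)).ne_zero
    (Q := P.map π) fun v => by
      obtain ⟨w, rfl⟩ := mapCoeffs_surjective residue_surjective v
      exact ⟨c • w, hcP w, map_smulₛₗ π c w⟩
  have hspan : degreeBox A κ ⊔ P.restrictScalars A = ⊤ := by
    refine degreeBox_sup_eq_top_of_mapCoeffs hc hcP fun v => ?_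
    obtain ⟨w, hw, _, ⟨p, hp, rfl⟩, hwp⟩ := Submodule.mem_sup.mp
      (codisjoint_iff.mp hcodisj ▸ Submodule.mem_top : π v ∈ _ ⊔ (P.map π).restrictScalars _)
    exact ⟨p, hp, by rwa [map_sub, ← eq_sub_of_add_eq hwp]⟩
  have hleading (l : Fin r) : ∃ q ∈ P, Pi.single l (X ^ κ l) - q ∈ degreeBox A κ := by
    obtain ⟨w, hw, q, hq, hwq⟩ := Submodule.mem_sup.mp
      (hspan ▸ Submodule.mem_top : Pi.single l (X ^ κ l) ∈ degreeBox A κ ⊔ P.restrictScalars A)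
    exact ⟨q, hq, by rwa [← hwq, add_sub_cancel_right]⟩
  choose q hqP hq using hleading
  set G := Submodule.span A[X] (Set.range q)
  have hGP : G ≤ P := Submodule.span_le.mpr (Set.range_subset_iff.mpr hqP)
  have hG : degreeBox A κ ⊔ G.restrictScalars A = ⊤ := degreeBox_sup_span_eq_top hq
  have := finite_quotient_of_degreeBox_sup_eq_top hG
  refine ⟨q, hGP.antisymm (le_of_le_sup_smul_of_finite_quotient (N := G.restrictScalars A)
    (P := P.restrictScalars A) (maximalIdeal_le_jacobson _) fun p hp => ?_)⟩
  obtain ⟨w, hw, g, hg, rfl⟩ := Submodule.mem_sup.mp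
    (hG ▸ Submodule.mem_top : p ∈ degreeBox A κ ⊔ G.restrictScalars A)
  have hwP : w ∈ P := (P.add_mem_iff_left (hGP hg)).mp hp
  have hπw : π w = 0 := Submodule.disjoint_def.mp hdisj _ (mapCoeffs_mem_degreeBox _ hw)
    (Submodule.mem_map_of_mem hwP)
  rw [add_comm]
  exact Submodule.add_mem_sup hg (hP ⟨hwP, ker_residue (R := A) ▸ mapCoeffs_eq_zero_iff.mp hπw⟩)

variable {m : Type*} [Fintype m] {e : Matrix m m A[X]}

lemma range_mulVecLin_inf_smul_top_le {c : A[X]} (hc : c.Monic) {α : Matrix m (Fin r) A[X]}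
    {β : Matrix (Fin r) m A[X]} (hαβ : α * β = c • e) (hβe : β * e = β) :
    (LinearMap.range β.mulVecLin).restrictScalars A ⊓ maximalIdeal A • ⊤ ≤
      maximalIdeal A • (LinearMap.range β.mulVecLin).restrictScalars A := by
  rintro _ ⟨⟨u, rfl⟩, hu⟩
  rw [← ker_residue] at hu ⊢
  have hcu : (c.map (residue A)) • mapCoeffs (residue A) m (e.mulVec u) = 0 := by
    calc (c.map (residue A)) • mapCoeffs (residue A) m (e.mulVec u)
        = mapCoeffs (residue A) m (α.mulVec (β.mulVec u)) := by
          rw [Matrix.mulVec_mulVec, hαβ, Matrix.smul_mulVec, map_smulₛₗ, coe_mapRingHom]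
      _ = 0 := by
          rw [mapCoeffs_mulVec]
          have : mapCoeffs (residue A) (Fin r) (β.mulVec u) = 0 := mapCoeffs_eq_zero_iff.mpr hu
          rw [this, Matrix.mulVec_zero]
  have heu : e.mulVec u ∈ RingHom.ker (residue A) • (⊤ : Submodule A (m → A[X])) :=
    mapCoeffs_eq_zero_iff.mp
      ((smul_eq_zero.mp hcu).resolve_left (hc.map (residue A)).ne_zero)
  have hβeu := Submodule.mem_map_of_mem (f := β.mulVecLin.restrictScalars A) heu
  rw [Submodule.map_smul'', Submodule.map_top] at hβeu
  have hβu : β.mulVec (e.mulVec u) = β.mulVec u := by rw [Matrix.mulVec_mulVec, hβe]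
  exact Set.mem_of_eq_of_mem hβu.symm hβeu

lemma exists_mul_eq_of_range_le {R k l n : Type*} [CommRing R] [Fintype l] [Fintype n]
    {N : Matrix k n R} {β : Matrix k l R}
    (h : LinearMap.range β.mulVecLin ≤ LinearMap.range N.mulVecLin) :
    ∃ y : Matrix n l R, N * y = β := by
  classical
  choose y hy using fun j => h ⟨Pi.single j 1, rfl⟩
  refine ⟨Matrix.of fun i j => y j i, Matrix.ext fun i j => ?_⟩
  calc (N * Matrix.of fun i j => y j i) i j = N.mulVecLin (y j) i := rfl
    _ = β i j := by rw [hy, Matrix.mulVecLin_apply, Matrix.mulVec_single_one, Matrix.col_apply]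

theorem hasFreeImage_of_splitsAway_of_isLocalRing [IsNoetherianRing A] {c : A[X]} (hc : c.Monic)
    (h : SplitsAway c e) : HasFreeImage e := by
  obtain ⟨r, α, β, hαβ, hβα, hβe⟩ := h
  have hcP (v : Fin r → A[X]) : c • v ∈ LinearMap.range β.mulVecLin :=
    ⟨α.mulVec v, by simp [Matrix.mulVec_mulVec, hβα, Matrix.smul_mulVec]⟩
  obtain ⟨q, hq⟩ := exists_span_range_eq_of_monic_smul_mem hc hcP
    (range_mulVecLin_inf_smul_top_le hc hαβ hβe)
  let N : Matrix (Fin r) (Fin r) A[X] := Matrix.of fun i l => q l i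
  have hN : LinearMap.range N.mulVecLin = LinearMap.range β.mulVecLin :=
    (Matrix.range_mulVecLin N).trans hq
  obtain ⟨y, hy⟩ := exists_mul_eq_of_range_le hN.ge
  obtain ⟨x, hx⟩ := exists_mul_eq_of_range_le hN.le
  have hdet : N.det * (y * α).det = c ^ r := by
    rw [← Matrix.det_mul, ← Matrix.mul_assoc, hy, hβα, Matrix.det_smul, Matrix.det_one, mul_one,
      Fintype.card_fin]
  have hNreg : IsLeftRegular N := by
    refine (Matrix.isRegular_of_isLeftRegular_det (.of_mul (a := (y * α).det) ?_)).left
    rw [mul_comm, hdet]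
    exact hc.isRegular.left.pow r
  have hc_inj : Function.Injective fun B : Matrix m m A[X] => c • B := fun B B' hB =>
    Matrix.ext fun i j => hc.isRegular.left (congrFun₂ hB i j)
  refine ⟨r, e * x, y, hc_inj ?_, hNreg ?_⟩
  · calc c • (e * x * y) = α * (β * x) * y := by
          rw [← Matrix.mul_assoc, hαβ]; simp
      _ = c • e := by rw [hx, Matrix.mul_assoc, hy, hαβ]
  · calc N * (y * (e * x)) = β * e * x := by rw [← hy]; simp only [Matrix.mul_assoc]
      _ = N * 1 := by rw [hβe, hx, Matrix.mul_one]

end LocalHorrocks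

theorem hasFreeImage_of_splitsAway_of_monic {A : Type u} [CommRing A] [IsDomain A]
    [IsNoetherianRing A] (hA : IdempotentsHaveFreeImage A) {n : ℕ}
    {e : Matrix (Fin n) (Fin n) A[X]} (he : IsIdempotentElem e) {c : A[X]} (hc : c.Monic)
    (h : SplitsAway c e) : HasFreeImage e := by
  have hlocal (P : Ideal A) [P.IsMaximal] :
      HasFreeImage (e.map (mapRingHom (algebraMap A (Localization.AtPrime P)))) := by
    have := IsLocalization.isNoetherianRing P.primeCompl (Localization.AtPrime P) ‹_›
    let φ := mapRingHom (algebraMap A (Localization.AtPrime P))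
    exact hasFreeImage_of_splitsAway_of_isLocalRing (hc.map _) (h.map φ)
  obtain ⟨r, hr⟩ :=
    (hA n (e.map (evalRingHom 0)) (isIdempotentElem_map _ he)).map (C : A →+* A[X])
  exact ⟨r, (mvNEquiv_map_C_eval_zero he hlocal).trans he .one hr⟩

section MvPolynomial

lemma exists_ringEquiv_mvPolynomial_polynomial (F σ : Type*) [CommRing F] :
    ∃ ψ : MvPolynomial σ F[X] ≃+* (MvPolynomial σ F)[X],
      ∀ f : F[X], ψ (MvPolynomial.C f) = f.map MvPolynomial.C := by
  let ψ := (MvPolynomial.optionEquivRight F σ).symm.trans (MvPolynomial.optionEquivLeft F σ)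
  refine ⟨ψ.toRingEquiv, RingHom.congr_fun
    (f := ψ.toRingEquiv.toRingHom.comp MvPolynomial.C) (g := mapRingHom MvPolynomial.C) ?_⟩
  have hC (a : F) : (MvPolynomial.optionEquivRight F σ).symm (MvPolynomial.C (C a)) =
      MvPolynomial.C a := by
    rw [AlgEquiv.symm_apply_eq, MvPolynomial.optionEquivRight_C]
  have hX : (MvPolynomial.optionEquivRight F σ).symm (MvPolynomial.C X) =
      MvPolynomial.X none := by
    rw [AlgEquiv.symm_apply_eq, MvPolynomial.optionEquivRight_X_none]
  ext <;> simp [ψ, hC, hX]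

theorem IdempotentsHaveFreeImage.mvPolynomial_polynomial {F σ : Type*} [Field F] [Finite σ]
    (hF : IdempotentsHaveFreeImage (MvPolynomial σ F))
    (hK : IdempotentsHaveFreeImage (MvPolynomial σ (FractionRing F[X]))) :
    IdempotentsHaveFreeImage (MvPolynomial σ F[X]) := by
  intro n e he
  let : Algebra (MvPolynomial σ F[X]) (MvPolynomial σ (FractionRing F[X])) :=
    MvPolynomial.algebraMvPolynomial
  have : IsLocalization (F[X]⁰.map (MvPolynomial.C (σ := σ)))
      (MvPolynomial σ (FractionRing F[X])) := MvPolynomial.isLocalization _ _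
  have hM : F[X]⁰.map (MvPolynomial.C (σ := σ)) ≤ (MvPolynomial σ F[X])⁰ :=
    map_le_nonZeroDivisors_of_injective _ (MvPolynomial.C_injective σ F[X]) le_rfl
  obtain ⟨_, ⟨f, hf, rfl⟩, hsplit⟩ :=
    exists_splitsAway hM (hK n _ (isIdempotentElem_map (algebraMap _ _) he))
  have hmonic : (f * C f.leadingCoeff⁻¹).Monic :=
    monic_mul_leadingCoeff_inv (nonZeroDivisors.ne_zero hf)
  obtain ⟨ψ, hψ⟩ := exists_ringEquiv_mvPolynomial_polynomial F σ
  have hsplit' := (hsplit.mul_left (MvPolynomial.C (C f.leadingCoeff⁻¹))).map ψ.toRingHom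
  rw [← map_mul, mul_comm (C _)] at hsplit'
  refine (hasFreeImage_map_ringEquiv_iff ψ).mp (hasFreeImage_of_splitsAway_of_monic hF
    (isIdempotentElem_map ψ.toRingHom he) (hmonic.map MvPolynomial.C) ?_)
  exact hψ (f * C f.leadingCoeff⁻¹) ▸ hsplit'

lemma idempotentsHaveFreeImage_mvPolynomial_of_finite (F σ : Type*) [Field F] [Finite σ] :
    IdempotentsHaveFreeImage (MvPolynomial σ F) := by
  induction σ using Finite.induction_empty_option generalizing F with
  | of_equiv ε h => exact (h F).of_ringEquiv (MvPolynomial.renameEquiv F ε.symm).toRingEquiv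
  | h_empty =>
    exact (idempotentsHaveFreeImage_of_field F).of_ringEquiv (MvPolynomial.isEmptyRingEquiv F _)
  | h_option h =>
    exact ((h F).mvPolynomial_polynomial (h _)).of_ringEquiv
      (MvPolynomial.optionEquivRight F _).toRingEquiv

lemma exists_finset_map_rename_eq {R σ m n : Type*} [CommRing R] [Finite m] [Finite n]
    (N : Matrix m n (MvPolynomial σ R)) :
    ∃ (s : Finset σ) (N' : Matrix m n (MvPolynomial s R)),
      N'.map (MvPolynomial.rename Subtype.val) = N := by
  classical
  cases nonempty_fintype m
  cases nonempty_fintype n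
  let s := Finset.univ.biUnion fun ij : m × n => (N ij.1 ij.2).vars
  have hs (i j) : ((N i j).vars : Set σ) ⊆ Set.range (Subtype.val : s → σ) := by
    rw [Subtype.range_coe]
    exact Finset.coe_subset.mpr (Finset.subset_biUnion_of_mem
      (fun ij : m × n => (N ij.1 ij.2).vars) (Finset.mem_univ (i, j)))
  choose N' hN' using fun i j =>
    MvPolynomial.exists_rename_eq_of_vars_subset_range (N i j) _ Subtype.val_injective (hs i j)
  exact ⟨s, Matrix.of N', Matrix.ext hN'⟩

theorem idempotentsHaveFreeImage_mvPolynomial (F σ : Type*) [Field F] :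
    IdempotentsHaveFreeImage (MvPolynomial σ F) := by
  intro n e he
  obtain ⟨s, e', rfl⟩ := exists_finset_map_rename_eq e
  let ρ : MvPolynomial s F →+* MvPolynomial σ F := (MvPolynomial.rename Subtype.val).toRingHom
  have hρ : Function.Injective ρ := MvPolynomial.rename_injective _ Subtype.val_injective
  have he' : IsIdempotentElem e' := Matrix.map_injective hρ (Matrix.map_mul.trans he)
  exact (idempotentsHaveFreeImage_mvPolynomial_of_finite F s n e' he').map ρ

end MvPolynomial

end QuillenSuslin

theorem stmt4_general (F σ : Type*) [Field F] (M : Type*) [AddCommGroup M]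
    [Module (MvPolynomial σ F) M] [Module.Finite (MvPolynomial σ F) M]
    [Module.Projective (MvPolynomial σ F) M] : Module.Free (MvPolynomial σ F) M :=
  (QuillenSuslin.idempotentsHaveFreeImage_mvPolynomial F σ).free M

/-- The Quillen–Suslin theorem: the polynomial ring in finitely many variables
over a field is projective free. -/
theorem stmt4 (F : Type) [Field F] (n : ℕ) :
    IsProjectiveFree (MvPolynomial (Fin n) F) :=
  fun M _ _ _ _ => stmt4_general F (Fin n) M
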